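/- arXiv:2209.14979 — 2 statements merged into one kernel-verified Lean document; each statement's English description precedes it below -/
import Mathlib

section
/- Define π : 𝕆 × 𝕆 → 𝕆 by π(x, y) := ½(x·ȳ − y·x̄). Then: (i) π(x, y) ∈ Im 𝕆 for all x, y ∈ 𝕆; and (ii) π is Spin(7)-equivariant: for every g ∈ Spin(7) and all x, y ∈ 𝕆 one has π(g(x), g(y)) = χ_g(π(x, y)). -/
open scoped InnerProductSpace

/-!
Left multiplication by an imaginary unit `u` permutes the left multiplications by conjugation:
`L_u L_w L_u⁻¹ = L_{c w}`, where `c` is the reflection in the hyperplane `u^⊥` followed by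
octonion conjugation, hence an isometry. The isometries `g` with `g L_w g⁻¹ = L_{c w}` for some
isometry `c` form a group, which therefore contains `Spin(7)`, and evaluating at the unit shows
`c = χ_g`. Since right multiplication by `ȳ` is adjoint to right multiplication by `y`, any such
pair `(g, c)` satisfies `g x · conj (g y) = c (x ȳ)`; antisymmetrize.
-/

section OrthogonalMultiplication

variable {E F G : Type*} [NormedAddCommGroup E] [InnerProductSpace ℝ E]
  [NormedAddCommGroup F] [InnerProductSpace ℝ F] [NormedAddCommGroup G] [InnerProductSpace ℝ G]

theorem inner_map_same_left {B : E →ₗ[ℝ] F →ₗ[ℝ] G} (hB : ∀ x y, ‖B x y‖ = ‖x‖ * ‖y‖)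
    (x : E) (y z : F) : ⟪B x y, B x z⟫_ℝ = ‖x‖ ^ 2 * ⟪y, z⟫_ℝ := by
  simp only [real_inner_eq_norm_add_mul_self_sub_norm_mul_self_sub_norm_mul_self_div_two,
    ← map_add, hB]
  ring

theorem inner_map_map_add_inner_map_map_swap {B : E →ₗ[ℝ] F →ₗ[ℝ] G}
    (hB : ∀ x y, ‖B x y‖ = ‖x‖ * ‖y‖) (x y : E) (z w : F) :
    ⟪B x z, B y w⟫_ℝ + ⟪B x w, B y z⟫_ℝ = 2 * ⟪x, y⟫_ℝ * ⟪z, w⟫_ℝ := by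
  have polarized := inner_map_same_left hB (x + y) z w
  simp only [map_add, LinearMap.add_apply, inner_add_left, inner_add_right,
    norm_add_sq_real, inner_map_same_left hB] at polarized
  rw [real_inner_comm (B x w) (B y z)] at polarized
  linear_combination polarized

/-- The conjugation `x ↦ x̄ = 2⟪x, e⟫e - x` attached to a unit vector `e`, encoded as the
reflection in the line `ℝe` so that it is a linear isometry by construction. -/
noncomputable def unitConj (e : E) : E ≃ₗᵢ[ℝ] E :=
  (ℝ ∙ e).reflection

theorem unitConj_apply {e : E} (he : ‖e‖ = 1) (x : E) :
    unitConj e x = (2 * ⟪x, e⟫_ℝ) • e - x := by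
  simp [unitConj, Submodule.reflection_singleton_apply, he, real_inner_comm x e, mul_smul,
    ofNat_smul_eq_nsmul]

theorem unitConj_eq_neg {e u : E} (hu : ⟪u, e⟫_ℝ = 0) : unitConj e u = -u :=
  Submodule.reflection_mem_subspace_orthogonalComplement_eq_neg
    (Submodule.mem_orthogonal_singleton_iff_inner_left.mpr hu)

section LeftUnit

variable {B : E →ₗ[ℝ] F →ₗ[ℝ] F} {e : E}

theorem inner_unitConj_map (hB : ∀ x y, ‖B x y‖ = ‖x‖ * ‖y‖) (he : ‖e‖ = 1)
    (unit_left : ∀ y, B e y = y) (x : E) (y z : F) :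
    ⟪B (unitConj e x) y, z⟫_ℝ = ⟪y, B x z⟫_ℝ := by
  have polarized := inner_map_map_add_inner_map_map_swap hB x e y z
  rw [unit_left, unit_left, real_inner_comm y (B x z)] at polarized
  simp only [unitConj_apply he, map_sub, map_smul, LinearMap.sub_apply, LinearMap.smul_apply,
    unit_left, inner_sub_left, real_inner_smul_left]
  linear_combination -polarized

theorem unitConj_map_map_add_swap (hB : ∀ x y, ‖B x y‖ = ‖x‖ * ‖y‖) (he : ‖e‖ = 1)
    (unit_left : ∀ y, B e y = y) (u w : E) (x : F) :
    B (unitConj e u) (B w x) + B (unitConj e w) (B u x) = (2 * ⟪u, w⟫_ℝ) • x := by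
  refine ext_inner_right ℝ fun t => ?_
  rw [inner_add_left, inner_unitConj_map hB he unit_left, inner_unitConj_map hB he unit_left,
    real_inner_smul_left, add_comm, real_inner_comm (B u t) (B w x)]
  exact inner_map_map_add_inner_map_map_swap hB u w x t

theorem unitConj_reflection_map_map (hB : ∀ x y, ‖B x y‖ = ‖x‖ * ‖y‖) (he : ‖e‖ = 1)
    (unit_left : ∀ y, B e y = y) {u : E} (hu : ‖u‖ = 1) (w : E) (x : F) :
    B (unitConj e ((ℝ ∙ u)ᗮ.reflection w)) (B u x) = -B (unitConj e u) (B w x) := by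
  have reflection_eq : (ℝ ∙ u)ᗮ.reflection w = w - (2 * ⟪u, w⟫_ℝ) • u := by
    rw [Submodule.reflection_orthogonal_apply, ← unitConj, unitConj_apply hu, neg_sub,
      real_inner_comm]
  have clifford := unitConj_map_map_add_swap hB he unit_left u
  have square : B (unitConj e u) (B u x) = x := by
    have h := clifford u x
    rw [real_inner_self_eq_norm_sq, hu, ← two_smul ℝ] at h
    simpa using h
  rw [reflection_eq, map_sub, map_smul, map_sub, map_smul, LinearMap.sub_apply,
    LinearMap.smul_apply, square, ← clifford w x]
  abel

/-- The group of linear isometries `g` that permute the left multiplications `L_w = B w` by an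
isometry `c`, i.e. `g L_w g⁻¹ = L_{c w}`. It contains `Spin(7)` when `B` is the octonion product.
Its elements are taken among all linear automorphisms, as are those of `Spin(7)`. -/
def isometricNormalizer (B : E →ₗ[ℝ] F →ₗ[ℝ] F) : Subgroup (F ≃ₗ[ℝ] F) where
  carrier := {g | (∀ x, ‖g x‖ = ‖x‖) ∧
    ∃ c : E ≃ₗᵢ[ℝ] E, ∀ w x, g (B w x) = B (c w) (g x)}
  one_mem' := ⟨fun _ => rfl, 1, fun _ _ => rfl⟩
  mul_mem' := by
    rintro g h ⟨g_norm, c, hc⟩ ⟨h_norm, d, hd⟩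
    exact ⟨fun x => (g_norm (h x)).trans (h_norm x), c * d, fun w x => by
      simp [LinearEquiv.mul_apply, hc, hd]⟩
  inv_mem' := by
    rintro g ⟨g_norm, c, hc⟩
    have apply_inv (x : F) : g (g⁻¹ x) = x := g.apply_symm_apply x
    refine ⟨fun x => by rw [← g_norm, apply_inv], c.symm, fun w x => g.injective ?_⟩
    rw [hc, apply_inv, apply_inv, c.apply_symm_apply]

theorem mem_isometricNormalizer_of_eq_map (hB : ∀ x y, ‖B x y‖ = ‖x‖ * ‖y‖) (he : ‖e‖ = 1)
    (unit_left : ∀ y, B e y = y) {u : E} (hu_imaginary : ⟪u, e⟫_ℝ = 0) (hu : ‖u‖ = 1)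
    {g : F ≃ₗ[ℝ] F} (hg : ∀ x, g x = B u x) : g ∈ isometricNormalizer B := by
  refine ⟨fun x => by rw [hg, hB, hu, one_mul],
    (ℝ ∙ u)ᗮ.reflection.trans (unitConj e), fun w x => ?_⟩
  simp [hg, unitConj_reflection_map_map hB he unit_left hu, unitConj_eq_neg hu_imaginary]

end LeftUnit

end OrthogonalMultiplication

section UnitalCompositionAlgebra

variable {O : Type*} [NormedAddCommGroup O] [InnerProductSpace ℝ O]
  {mul : O →ₗ[ℝ] O →ₗ[ℝ] O} {e : O}

theorem inner_mul_unitConj (norm_mul : ∀ x y, ‖mul x y‖ = ‖x‖ * ‖y‖) (he : ‖e‖ = 1)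
    (unit_right : ∀ x, mul x e = x) (x y z : O) :
    ⟪mul x (unitConj e y), z⟫_ℝ = ⟪x, mul z y⟫_ℝ :=
  inner_unitConj_map (B := mul.flip) (fun x y => (norm_mul y x).trans (mul_comm _ _)) he
    unit_right y x z

theorem inner_mul_unitConj_unit (norm_mul : ∀ x y, ‖mul x y‖ = ‖x‖ * ‖y‖) (he : ‖e‖ = 1)
    (unit_left : ∀ x, mul e x = x) (unit_right : ∀ x, mul x e = x) (x y : O) :
    ⟪mul x (unitConj e y), e⟫_ℝ = ⟪x, y⟫_ℝ := by
  rw [inner_mul_unitConj norm_mul he unit_right, unit_left]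

theorem mul_unitConj_equivariant (norm_mul : ∀ x y, ‖mul x y‖ = ‖x‖ * ‖y‖) (he : ‖e‖ = 1)
    (unit_right : ∀ x, mul x e = x) {g : O ≃ₗ[ℝ] O} (g_norm : ∀ x, ‖g x‖ = ‖x‖)
    {c : O ≃ₗᵢ[ℝ] O} (hc : ∀ w x, g (mul w x) = mul (c w) (g x)) (x y : O) :
    mul (g x) (unitConj e (g y)) = c (mul x (unitConj e y)) := by
  refine ext_inner_right ℝ fun t => ?_
  obtain ⟨s, rfl⟩ := c.surjective t
  calc ⟪mul (g x) (unitConj e (g y)), c s⟫_ℝ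
      = ⟪g x, g (mul s y)⟫_ℝ := by rw [inner_mul_unitConj norm_mul he unit_right, hc]
    _ = ⟪x, mul s y⟫_ℝ := (LinearIsometry.mk g.toLinearMap g_norm).inner_map_map x (mul s y)
    _ = ⟪mul x (unitConj e y), s⟫_ℝ := (inner_mul_unitConj norm_mul he unit_right x y s).symm
    _ = ⟪c (mul x (unitConj e y)), c s⟫_ℝ := (c.inner_map_map _ _).symm

end UnitalCompositionAlgebra

theorem pi_imaginary_and_equivariant_general
    {O : Type*} [NormedAddCommGroup O] [InnerProductSpace ℝ O]
    (mul : O →ₗ[ℝ] O →ₗ[ℝ] O) (e : O) (he : ‖e‖ = 1)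
    (unit_left : ∀ x : O, mul e x = x) (unit_right : ∀ x : O, mul x e = x)
    (norm_mul : ∀ x y : O, ‖mul x y‖ = ‖x‖ * ‖y‖)
    (conj : O → O) (hconj : ∀ x : O, conj x = (2 * ⟪x, e⟫_ℝ) • e - x)
    (Spin : Subgroup (O ≃ₗ[ℝ] O))
    (hSpin : Spin = Subgroup.closure
      {g : O ≃ₗ[ℝ] O | ∃ u : O, ⟪u, e⟫_ℝ = 0 ∧ ‖u‖ = 1 ∧ ∀ x : O, g x = mul u x})
    (chi : (O ≃ₗ[ℝ] O) → O → O)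
    (hchi : ∀ (g : O ≃ₗ[ℝ] O) (x : O), chi g x = g (mul x (g.symm e)))
    (pi : O → O → O)
    (hpi : ∀ x y : O, pi x y = (1 / 2 : ℝ) • (mul x (conj y) - mul y (conj x))) :
    (∀ x y : O, ⟪pi x y, e⟫_ℝ = 0) ∧
    (∀ g ∈ Spin, ∀ x y : O, pi (g x) (g y) = chi g (pi x y)) := by
  obtain rfl : conj = unitConj e := funext fun x => (hconj x).trans (unitConj_apply he x).symm
  refine ⟨fun x y => ?_, fun g hg x y => ?_⟩
  · simp only [hpi, real_inner_smul_left, inner_sub_left,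
      inner_mul_unitConj_unit norm_mul he unit_left unit_right, real_inner_comm x y, sub_self,
      mul_zero]
  · have Spin_le : Spin ≤ isometricNormalizer mul := by
      rw [hSpin, Subgroup.closure_le]
      rintro g ⟨u, hu_imaginary, hu, hg⟩
      exact mem_isometricNormalizer_of_eq_map norm_mul he unit_left hu_imaginary hu hg
    obtain ⟨g_norm, c, hc⟩ := Spin_le hg
    have chi_eq (w : O) : chi g w = c w := by
      rw [hchi, hc, g.apply_symm_apply, unit_right]
    simp only [hpi, chi_eq, map_smul, map_sub,
      mul_unitConj_equivariant norm_mul he unit_right g_norm hc]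

/-- The map `π(x,y) = ½(x·ȳ − y·x̄)` takes values in `Im 𝕆` and is
`Spin(7)`-equivariant: `π(g x, g y) = χ_g(π(x,y))` for every `g ∈ Spin(7)`, where
`χ_g(u) = g(u·g⁻¹(1))`. -/
theorem pi_imaginary_and_equivariant
    {O : Type*} [NormedAddCommGroup O] [InnerProductSpace ℝ O]
    (hdim : Module.finrank ℝ O = 8)
    (mul : O →ₗ[ℝ] O →ₗ[ℝ] O) (e : O) (he : ‖e‖ = 1)
    (unit_left : ∀ x : O, mul e x = x) (unit_right : ∀ x : O, mul x e = x)
    (norm_mul : ∀ x y : O, ‖mul x y‖ = ‖x‖ * ‖y‖)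
    (conj : O → O) (hconj : ∀ x : O, conj x = (2 * ⟪x, e⟫_ℝ) • e - x)
    (Spin7 : Subgroup (O ≃ₗ[ℝ] O))
    (hSpin7 : Spin7 = Subgroup.closure
      {g : O ≃ₗ[ℝ] O | ∃ u : O, ⟪u, e⟫_ℝ = 0 ∧ ‖u‖ = 1 ∧ ∀ x : O, g x = mul u x})
    (chi : (O ≃ₗ[ℝ] O) → O → O)
    (hchi : ∀ (g : O ≃ₗ[ℝ] O) (x : O), chi g x = g (mul x (g.symm e)))
    (pi : O → O → O)
    (hpi : ∀ x y : O, pi x y = (1 / 2 : ℝ) • (mul x (conj y) - mul y (conj x))) :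
    (∀ x y : O, ⟪pi x y, e⟫_ℝ = 0) ∧
    (∀ g ∈ Spin7, ∀ x y : O, pi (g x) (g y) = chi g (pi x y)) :=
  pi_imaginary_and_equivariant_general mul e he unit_left unit_right norm_mul conj hconj Spin7
    hSpin7 chi hchi pi hpi
end

section
/- Let u ∈ Im 𝕆, let x₁, …, x₆ ∈ 𝕆, and let f₀, …, f₇ be an orthonormal basis of 𝕆. Then Σ_{i=0}^{7} Φ(u·f_i, x₁, x₂, x₃) · Φ(f_i, x₄, x₅, x₆) = −Φ(u·(x₁ × x₂ × x₃), x₄, x₅, x₆). -/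
open scoped InnerProductSpace

/-!
Right multiplication by `a` scales every norm by `‖a‖`, so polarization gives
`⟪u·a, a⟫ = ⟪u·a, e·a⟫ = ‖a‖² ⟪u, e⟫`, which vanishes for imaginary `u`. Left multiplication by
such a `u` is therefore skew-symmetric: it can be moved from `f i` onto the other vector
`x₁ × x₂ × x₃` at the cost of a sign, and the remaining sum over `f` is Parseval's identity.
-/

section Similarity

variable {𝕜 E F G : Type*} [RCLike 𝕜]
  [SeminormedAddCommGroup E] [InnerProductSpace 𝕜 E]
  [SeminormedAddCommGroup F] [NormedSpace 𝕜 F]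
  [SeminormedAddCommGroup G] [InnerProductSpace 𝕜 G]

theorem inner_map_map_of_norm_map_eq_mul {T : E →ₗ[𝕜] G} {c : ℝ}
    (hT : ∀ x, ‖T x‖ = c * ‖x‖) (x y : E) : ⟪T x, T y⟫_𝕜 = (c : 𝕜) ^ 2 * ⟪x, y⟫_𝕜 := by
  simp only [inner_eq_sum_norm_sq_div_four, ← map_smul, ← map_add, ← map_sub, hT]
  push_cast
  ring

theorem inner_mul_mul_right_of_norm_mul {mul : E →ₗ[𝕜] F →ₗ[𝕜] G}
    (norm_mul : ∀ x a, ‖mul x a‖ = ‖x‖ * ‖a‖) (x y : E) (a : F) :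
    ⟪mul x a, mul y a⟫_𝕜 = (‖a‖ : 𝕜) ^ 2 * ⟪x, y⟫_𝕜 := by
  have right_mul_scales (z : E) : ‖mul.flip a z‖ = ‖a‖ * ‖z‖ := by
    rw [LinearMap.flip_apply, norm_mul, mul_comm]
  exact inner_map_map_of_norm_map_eq_mul right_mul_scales x y

end Similarity

theorem inner_map_eq_neg_of_inner_map_self_eq_zero {E : Type*}
    [SeminormedAddCommGroup E] [InnerProductSpace ℝ E] {T : E →ₗ[ℝ] E}
    (hT : ∀ x, ⟪T x, x⟫_ℝ = 0) (x y : E) : ⟪T x, y⟫_ℝ = -⟪T y, x⟫_ℝ :=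
  have alternating : (innerₗ E ∘ₗ T).IsAlt := hT
  (alternating.neg y x).symm

theorem sum_inner_map_mul_inner_of_inner_map_self_eq_zero {E ι : Type*} [Fintype ι]
    [NormedAddCommGroup E] [InnerProductSpace ℝ E] {T : E →ₗ[ℝ] E}
    (hT : ∀ x, ⟪T x, x⟫_ℝ = 0) (f : OrthonormalBasis ι ℝ E) (a b : E) :
    ∑ i, ⟪T (f i), a⟫_ℝ * ⟪f i, b⟫_ℝ = -⟪T a, b⟫_ℝ :=
  calc ∑ i, ⟪T (f i), a⟫_ℝ * ⟪f i, b⟫_ℝ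
      = ∑ i, -(⟪T a, f i⟫_ℝ * ⟪f i, b⟫_ℝ) := by
        simp only [inner_map_eq_neg_of_inner_map_self_eq_zero hT (f _) a, neg_mul]
    _ = -⟪T a, b⟫_ℝ := by
        rw [Finset.sum_neg_distrib, f.sum_inner_mul_inner]

theorem inner_mul_self_eq_zero_of_norm_mul {V A : Type*}
    [SeminormedAddCommGroup V] [InnerProductSpace ℝ V]
    [SeminormedAddCommGroup A] [InnerProductSpace ℝ A]
    {mul : V →ₗ[ℝ] A →ₗ[ℝ] A} {e : V} (unit_left : ∀ a, mul e a = a)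
    (norm_mul : ∀ v a, ‖mul v a‖ = ‖v‖ * ‖a‖) {u : V} (hu : ⟪u, e⟫_ℝ = 0) (a : A) :
    ⟪mul u a, a⟫_ℝ = 0 :=
  calc ⟪mul u a, a⟫_ℝ = ⟪mul u a, mul e a⟫_ℝ := by rw [unit_left]
    _ = ‖a‖ ^ 2 * ⟪u, e⟫_ℝ := inner_mul_mul_right_of_norm_mul norm_mul u e a
    _ = 0 := by rw [hu, mul_zero]

/-- Apart from composition algebras (`V = A`), this covers Clifford modules: there `V` is
`ℝ e` plus the generating space, and `A` may have dimensions other than 1, 2, 4 and 8. -/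
theorem cayley_calibration_contraction_general {V A ι : Type*} [Fintype ι]
    [SeminormedAddCommGroup V] [InnerProductSpace ℝ V]
    [NormedAddCommGroup A] [InnerProductSpace ℝ A]
    {mul : V →ₗ[ℝ] A →ₗ[ℝ] A} {e : V} (unit_left : ∀ a, mul e a = a)
    (norm_mul : ∀ v a, ‖mul v a‖ = ‖v‖ * ‖a‖) {u : V} (hu : ⟪u, e⟫_ℝ = 0)
    (f : OrthonormalBasis ι ℝ A) (a b : A) :
    ∑ i, ⟪mul u (f i), a⟫_ℝ * ⟪f i, b⟫_ℝ = -⟪mul u a, b⟫_ℝ :=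
  sum_inner_map_mul_inner_of_inner_map_self_eq_zero
    (inner_mul_self_eq_zero_of_norm_mul unit_left norm_mul hu) f a b

/-- For an imaginary octonion `u`, octonions `x₁, …, x₆` and an
orthonormal basis `f₀, …, f₇` of `𝕆`:
`Σ_i Φ(u·f_i, x₁, x₂, x₃)·Φ(f_i, x₄, x₅, x₆) = −Φ(u·(x₁ × x₂ × x₃), x₄, x₅, x₆)`. -/
theorem cayley_calibration_contraction
    {O : Type*} [NormedAddCommGroup O] [InnerProductSpace ℝ O]
    (hdim : Module.finrank ℝ O = 8)
    (mul : O →ₗ[ℝ] O →ₗ[ℝ] O) (e : O) (he : ‖e‖ = 1)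
    (unit_left : ∀ x : O, mul e x = x) (unit_right : ∀ x : O, mul x e = x)
    (norm_mul : ∀ x y : O, ‖mul x y‖ = ‖x‖ * ‖y‖)
    (conj : O → O) (hconj : ∀ x : O, conj x = (2 * ⟪x, e⟫_ℝ) • e - x)
    (cross : O → O → O → O)
    (hcross : ∀ x y z : O,
      cross x y z = (1 / 2 : ℝ) • (mul (mul x (conj y)) z - mul (mul z (conj y)) x))
    (Phi : O → O → O → O → ℝ)
    (hPhi : ∀ w x y z : O, Phi w x y z = ⟪w, cross x y z⟫_ℝ)
    (u : O) (hu : ⟪u, e⟫_ℝ = 0)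
    (x₁ x₂ x₃ x₄ x₅ x₆ : O)
    (f : OrthonormalBasis (Fin 8) ℝ O) :
    ∑ i : Fin 8, Phi (mul u (f i)) x₁ x₂ x₃ * Phi (f i) x₄ x₅ x₆
      = -Phi (mul u (cross x₁ x₂ x₃)) x₄ x₅ x₆ := by
  simpa only [hPhi] using cayley_calibration_contraction_general unit_left norm_mul hu f
    (cross x₁ x₂ x₃) (cross x₄ x₅ x₆)
end
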